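/- arXiv:0905.2626 — 2 statements merged into one kernel-verified Lean document; each statement's English description precedes it below -/
import Mathlib

section
/- For every t > 0 the function p_t is integrable on ℝ^d and its Fourier transform recovers the stable symbol: ∫_{ℝ^d} p_t(x) e^{i⟨x, ξ⟩} dx = e^{−t|ξ|^α} for every ξ ∈ ℝ^d. -/
open MeasureTheory Real Filter
open scoped RealInnerProductSpace Topology

section aux
variable {d : ℕ}

def PDf (F : EuclideanSpace ℝ (Fin d) → ℝ) : Prop :=
  ∀ δ : ℝ, 0 < δ → ∀ x : EuclideanSpace ℝ (Fin d),
    0 ≤ ∫ ξ, F ξ * (Real.exp (-δ * ‖ξ‖ ^ 2) * Real.cos ⟪x, ξ⟫)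

lemma gauss_int (δ : ℝ) (hδ : 0 < δ) :
    Integrable (fun ξ : EuclideanSpace ℝ (Fin d) => Real.exp (-δ * ‖ξ‖ ^ 2)) := by
  have := (GaussianFourier.integrable_cexp_neg_mul_sq_norm_add (V := EuclideanSpace ℝ (Fin d))
    (b := (δ : ℂ)) (by simpa using hδ) 0 0).norm
  refine this.congr (Eventually.of_forall fun ξ => ?_)
  simp only [zero_mul, add_zero]
  rw [Complex.norm_exp]
  norm_cast

lemma pd_one : PDf (fun _ : EuclideanSpace ℝ (Fin d) => 1) := by
  intro δ hδ x
  have h1 := GaussianFourier.integral_cexp_neg_mul_sq_norm_add (V := EuclideanSpace ℝ (Fin d))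
    (b := (δ : ℂ)) (by simpa using hδ) Complex.I x
  have h2 := GaussianFourier.integrable_cexp_neg_mul_sq_norm_add (V := EuclideanSpace ℝ (Fin d))
    (b := (δ : ℂ)) (by simpa using hδ) Complex.I x
  have h3 : ∫ ξ : EuclideanSpace ℝ (Fin d), (1:ℝ) * (Real.exp (-δ * ‖ξ‖ ^ 2) * Real.cos ⟪x, ξ⟫)
      = (∫ v : EuclideanSpace ℝ (Fin d), Complex.exp (-δ * ‖v‖ ^ 2 + Complex.I * ⟪x, v⟫)).re := by
    rw [← RCLike.re_eq_complex_re, ← integral_re h2]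
    congr 1
    ext ξ
    simp only [RCLike.re_eq_complex_re, Complex.exp_re, one_mul]
    norm_cast
    simp [← Complex.ofReal_pow]
  rw [h3, h1]
  have : ((π / δ : ℂ) ^ (Module.finrank ℝ (EuclideanSpace ℝ (Fin d)) / 2 : ℂ) *
    Complex.exp (Complex.I ^ 2 * ‖x‖ ^ 2 / (4 * δ))) =
    (((π / δ) ^ (Module.finrank ℝ (EuclideanSpace ℝ (Fin d)) / 2 : ℝ) *
      Real.exp (-1 * ‖x‖ ^ 2 / (4 * δ)) : ℝ) : ℂ) := by
    rw [Complex.I_sq, Complex.ofReal_mul, Complex.ofReal_cpow (by positivity)]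
    push_cast
    rfl
  rw [this, Complex.ofReal_re]
  positivity

lemma bdd_int {F : EuclideanSpace ℝ (Fin d) → ℝ} {C : ℝ} (hm : AEStronglyMeasurable F)
    (hb : ∀ ξ, |F ξ| ≤ C) (δ : ℝ) (hδ : 0 < δ) (x : EuclideanSpace ℝ (Fin d)) :
    Integrable (fun ξ => F ξ * (Real.exp (-δ * ‖ξ‖ ^ 2) * Real.cos ⟪x, ξ⟫)) := by
  refine Integrable.bdd_mul (c := C) ?_ hm (Eventually.of_forall hb)
  refine (gauss_int δ hδ).mono' (Continuous.aestronglyMeasurable (by fun_prop))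
    (Eventually.of_forall fun ξ => ?_)
  rw [norm_mul, Real.norm_eq_abs, Real.norm_eq_abs, abs_of_pos (Real.exp_pos _)]
  exact mul_le_of_le_one_right (Real.exp_pos _).le (Real.abs_cos_le_one _)

lemma pd_lim {F : ℕ → EuclideanSpace ℝ (Fin d) → ℝ} {G : EuclideanSpace ℝ (Fin d) → ℝ} {C : ℝ}
    (hm : ∀ n, AEStronglyMeasurable (F n)) (hb : ∀ n ξ, |F n ξ| ≤ C)
    (hl : ∀ ξ, Tendsto (fun n => F n ξ) atTop (𝓝 (G ξ))) (hF : ∀ n, PDf (F n)) : PDf G := by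
  intro δ hδ x
  refine ge_of_tendsto' (tendsto_integral_of_dominated_convergence
    (fun ξ => C * Real.exp (-δ * ‖ξ‖ ^ 2)) (fun n => (bdd_int (hm n) (hb n) δ hδ x).1)
    ((gauss_int δ hδ).const_mul C) (fun n => Eventually.of_forall fun ξ => ?_)
    (Eventually.of_forall fun ξ => (hl ξ).mul_const _)) (fun n => hF n δ hδ x)
  rw [norm_mul, norm_mul, Real.norm_eq_abs, Real.norm_eq_abs, Real.norm_eq_abs,
    abs_of_pos (Real.exp_pos _)]
  have h0 : 0 ≤ C := (abs_nonneg _).trans (hb n ξ)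
  exact mul_le_mul (hb n ξ) (mul_le_of_le_one_right (Real.exp_pos _).le (Real.abs_cos_le_one _))
    (by positivity) h0

lemma pd_add {F G : EuclideanSpace ℝ (Fin d) → ℝ} {C D : ℝ} (hF : PDf F) (hG : PDf G)
    (hm : AEStronglyMeasurable F) (hb : ∀ ξ, |F ξ| ≤ C)
    (hm' : AEStronglyMeasurable G) (hb' : ∀ ξ, |G ξ| ≤ D) : PDf (fun ξ => F ξ + G ξ) := by
  intro δ hδ x
  simp only [add_mul]
  rw [integral_add (bdd_int hm hb δ hδ x) (bdd_int hm' hb' δ hδ x)]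
  exact add_nonneg (hF δ hδ x) (hG δ hδ x)

lemma pd_smul {F : EuclideanSpace ℝ (Fin d) → ℝ} (hF : PDf F) {c : ℝ} (hc : 0 ≤ c) :
    PDf (fun ξ => c * F ξ) := by
  intro δ hδ x
  simp only [mul_assoc]
  rw [integral_const_mul]
  exact mul_nonneg hc (hF δ hδ x)

/-- Laplace-type mixture. -/
noncomputable def gmix (β ε : ℝ) (ξ : EuclideanSpace ℝ (Fin d)) : ℝ :=
  ∫ s in Set.Ioi ε, s ^ (-1 - β) * Real.exp (-s * ‖ξ‖ ^ 2)

noncomputable def gtot (β ε : ℝ) : ℝ := ∫ s in Set.Ioi ε, s ^ (-1 - β)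

lemma w_int {β ε : ℝ} (hβ : 0 < β) (hε : 0 < ε) :
    Integrable (fun s : ℝ => s ^ (-1 - β)) (volume.restrict (Set.Ioi ε)) :=
  integrableOn_Ioi_rpow_of_lt (by linarith) hε

lemma gm_int {β ε : ℝ} (hβ : 0 < β) (hε : 0 < ε) (ξ : EuclideanSpace ℝ (Fin d)) :
    Integrable (fun s : ℝ => s ^ (-1 - β) * Real.exp (-s * ‖ξ‖ ^ 2))
      (volume.restrict (Set.Ioi ε)) := by
  refine (w_int hβ hε).mul_bdd (c := 1) (Continuous.aestronglyMeasurable (by fun_prop)) ?_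
  refine (ae_restrict_mem measurableSet_Ioi).mono fun s hs => ?_
  have : 0 < s := hε.trans hs
  rw [Real.norm_eq_abs, abs_of_pos (Real.exp_pos _), Real.exp_le_one_iff]
  nlinarith [sq_nonneg ‖ξ‖]

lemma gmix_nonneg {β ε : ℝ} (hε : 0 < ε) (ξ : EuclideanSpace ℝ (Fin d)) : 0 ≤ gmix β ε ξ := by
  refine setIntegral_nonneg measurableSet_Ioi fun s hs => ?_
  have : 0 < s := hε.trans hs
  positivity

lemma gmix_le {β ε : ℝ} (hβ : 0 < β) (hε : 0 < ε) (ξ : EuclideanSpace ℝ (Fin d)) :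
    gmix β ε ξ ≤ gtot β ε := by
  refine setIntegral_mono_on (gm_int hβ hε ξ) (w_int hβ hε) measurableSet_Ioi fun s hs => ?_
  have : 0 < s := hε.trans hs
  refine mul_le_of_le_one_right (by positivity) ?_
  rw [Real.exp_le_one_iff]
  nlinarith [sq_nonneg ‖ξ‖]

lemma gmix_meas {β ε : ℝ} : StronglyMeasurable (gmix (d := d) β ε) := by
  refine StronglyMeasurable.integral_prod_right (ν := volume.restrict (Set.Ioi ε))
    (f := fun (ξ : EuclideanSpace ℝ (Fin d)) (s : ℝ) => s ^ (-1 - β) * Real.exp (-s * ‖ξ‖ ^ 2)) ?_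
  apply Measurable.stronglyMeasurable
  unfold Function.uncurry
  fun_prop

lemma pd_mul_gmix {F : EuclideanSpace ℝ (Fin d) → ℝ} {C : ℝ} (hF : PDf F)
    (hm : AEStronglyMeasurable F) (hb : ∀ ξ, |F ξ| ≤ C) {β ε : ℝ} (hβ : 0 < β) (hε : 0 < ε) :
    PDf (fun ξ => F ξ * gmix β ε ξ) := by
  intro δ hδ x
  have e1 : ∀ ξ : EuclideanSpace ℝ (Fin d),
      F ξ * gmix β ε ξ * (Real.exp (-δ * ‖ξ‖ ^ 2) * Real.cos ⟪x, ξ⟫) =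
      ∫ s in Set.Ioi ε, (F ξ * (Real.exp (-δ * ‖ξ‖ ^ 2) * Real.cos ⟪x, ξ⟫)) *
        (s ^ (-1 - β) * Real.exp (-s * ‖ξ‖ ^ 2)) := by
    intro ξ
    rw [integral_const_mul, gmix]
    ring
  simp only [e1]
  rw [integral_integral_swap]
  · refine setIntegral_nonneg measurableSet_Ioi fun s hs => ?_
    have hs0 : 0 < s := hε.trans hs
    have e2 : ∀ ξ : EuclideanSpace ℝ (Fin d),
      (F ξ * (Real.exp (-δ * ‖ξ‖ ^ 2) * Real.cos ⟪x, ξ⟫)) *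
        (s ^ (-1 - β) * Real.exp (-s * ‖ξ‖ ^ 2)) =
      s ^ (-1 - β) * (F ξ * (Real.exp (-(δ + s) * ‖ξ‖ ^ 2) * Real.cos ⟪x, ξ⟫)) := by
      intro ξ
      rw [show -(δ + s) * ‖ξ‖ ^ 2 = -δ * ‖ξ‖ ^ 2 + -s * ‖ξ‖ ^ 2 by ring, Real.exp_add]
      ring
    simp only [e2]
    rw [integral_const_mul]
    exact mul_nonneg (by positivity) (hF _ (by positivity) x)
  · have h := (bdd_int hm hb δ hδ x).mul_prod (w_int hβ hε)
    have h2 : AEStronglyMeasurable (fun z : EuclideanSpace ℝ (Fin d) × ℝ =>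
        Real.exp (-z.2 * ‖z.1‖ ^ 2)) (volume.prod (volume.restrict (Set.Ioi ε))) :=
      Continuous.aestronglyMeasurable (by fun_prop)
    refine (h.mul_bdd (c := 1) h2 ?_).congr (Eventually.of_forall fun z => ?_)
    · have : ∀ᵐ z : EuclideanSpace ℝ (Fin d) × ℝ ∂(volume.prod (volume.restrict (Set.Ioi ε))),
          z.2 ∈ Set.Ioi ε :=
        Measure.quasiMeasurePreserving_snd.ae (ae_restrict_mem measurableSet_Ioi)
      refine this.mono fun z hz => ?_
      have : 0 < z.2 := hε.trans hz
      rw [Real.norm_eq_abs, abs_of_pos (Real.exp_pos _), Real.exp_le_one_iff]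
      nlinarith [sq_nonneg ‖z.1‖]
    · simp only [Function.uncurry]
      ring

lemma gtot_nonneg {β ε : ℝ} (hε : 0 < ε) : 0 ≤ gtot β ε := by
  refine setIntegral_nonneg measurableSet_Ioi fun s hs => ?_
  have : 0 < s := hε.trans hs
  positivity

lemma pow_bd {β ε : ℝ} (hβ : 0 < β) (hε : 0 < ε) (n : ℕ) (ξ : EuclideanSpace ℝ (Fin d)) :
    |gmix β ε ξ ^ n| ≤ gtot β ε ^ n := by
  rw [abs_of_nonneg (pow_nonneg (gmix_nonneg hε ξ) _)]
  exact pow_le_pow_left₀ (gmix_nonneg hε ξ) (gmix_le hβ hε ξ) n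

lemma pd_pow {β ε : ℝ} (hβ : 0 < β) (hε : 0 < ε) (n : ℕ) :
    PDf (fun ξ : EuclideanSpace ℝ (Fin d) => gmix β ε ξ ^ n) := by
  induction n with
  | zero => simpa using pd_one
  | succ n ih =>
    simp only [pow_succ]
    exact pd_mul_gmix ih (gmix_meas.pow n).aestronglyMeasurable (pow_bd hβ hε n) hβ hε

lemma psum_bd {β ε c : ℝ} (hβ : 0 < β) (hε : 0 < ε) (hc : 0 ≤ c) (n : ℕ)
    (ξ : EuclideanSpace ℝ (Fin d)) :
    |∑ k ∈ Finset.range n, c ^ k / k.factorial * gmix β ε ξ ^ k| ≤ Real.exp (c * gtot β ε) := by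
  have h0 := gmix_nonneg (β := β) hε ξ
  rw [abs_of_nonneg (Finset.sum_nonneg fun k _ => by positivity)]
  refine le_trans ?_ (Real.sum_le_exp_of_nonneg (mul_nonneg hc (gtot_nonneg hε)) n)
  refine Finset.sum_le_sum fun k _ => ?_
  rw [mul_pow, mul_div_right_comm]
  gcongr
  exact gmix_le hβ hε ξ

lemma psum_meas {β ε c : ℝ} (n : ℕ) : StronglyMeasurable
    (fun ξ : EuclideanSpace ℝ (Fin d) =>
      ∑ k ∈ Finset.range n, c ^ k / k.factorial * gmix β ε ξ ^ k) :=
  Finset.stronglyMeasurable_fun_sum _ fun k _ => (gmix_meas.pow k).const_mul _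

lemma pd_exp {β ε c : ℝ} (hβ : 0 < β) (hε : 0 < ε) (hc : 0 ≤ c) :
    PDf (fun ξ : EuclideanSpace ℝ (Fin d) => Real.exp (c * gmix β ε ξ)) := by
  refine pd_lim (F := fun n ξ => ∑ k ∈ Finset.range n, c ^ k / k.factorial * gmix β ε ξ ^ k)
    (fun n => (psum_meas n).aestronglyMeasurable) (psum_bd hβ hε hc) ?_ ?_
  · intro ξ
    have := (NormedSpace.expSeries_div_hasSum_exp (c * gmix β ε ξ)).tendsto_sum_nat
    rw [← Real.exp_eq_exp_ℝ] at this
    refine this.congr fun n => Finset.sum_congr rfl fun k _ => ?_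
    rw [mul_pow, mul_div_right_comm]
  · intro n
    induction n with
    | zero => intro δ hδ x; simp
    | succ n ih =>
      simp only [Finset.sum_range_succ]
      refine pd_add ih (pd_smul (pd_pow hβ hε n) (by positivity))
        (psum_meas n).aestronglyMeasurable (psum_bd hβ hε hc n)
        ((gmix_meas.pow n).const_mul _).aestronglyMeasurable
        (D := c ^ n / n.factorial * gtot β ε ^ n) ?_
      intro ξ
      rw [abs_mul, abs_of_nonneg (by positivity : 0 ≤ c ^ n / n.factorial)]
      exact mul_le_mul_of_nonneg_left (pow_bd hβ hε n ξ) (by positivity)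


lemma phi_int {β r : ℝ} (hβ : 0 < β) (hβ1 : β < 1) (hr : 0 ≤ r) :
    IntegrableOn (fun s : ℝ => s ^ (-1 - β) * (1 - Real.exp (-s * r))) (Set.Ioi 0) := by
  have hmeas : Measurable (fun s : ℝ => s ^ (-1 - β) * (1 - Real.exp (-s * r))) := by fun_prop
  rw [← Set.Ioc_union_Ioi_eq_Ioi (zero_le_one (α := ℝ))]
  refine IntegrableOn.union ?_ ?_
  · have h1 : IntegrableOn (fun s : ℝ => r * s ^ (-β)) (Set.Ioc 0 1) := by
      have := (intervalIntegral.intervalIntegrable_rpow' (a := 0) (b := 1)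
        (r := -β) (by linarith)).const_mul r
      rwa [intervalIntegrable_iff_integrableOn_Ioc_of_le zero_le_one] at this
    refine h1.mono' hmeas.aestronglyMeasurable ?_
    refine (ae_restrict_mem measurableSet_Ioc).mono fun s hs => ?_
    have hs0 : 0 < s := hs.1
    have h2 : Real.exp (-s * r) ≤ 1 := by
      rw [Real.exp_le_one_iff]; nlinarith
    have h3 := Real.add_one_le_exp (-s * r)
    rw [Real.norm_eq_abs, abs_of_nonneg (mul_nonneg (by positivity) (by linarith))]
    calc s ^ (-1 - β) * (1 - Real.exp (-s * r)) ≤ s ^ (-1 - β) * (s * r) := by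
          gcongr; linarith
      _ = r * (s ^ (-1 - β) * s ^ (1:ℝ)) := by rw [Real.rpow_one]; ring
      _ = r * s ^ (-β) := by rw [← Real.rpow_add hs0]; congr 2; ring
  · refine (w_int hβ zero_lt_one).mono' hmeas.aestronglyMeasurable ?_
    refine (ae_restrict_mem measurableSet_Ioi).mono fun s hs => ?_
    have hs0 : 0 < s := zero_lt_one.trans hs
    have h2 : Real.exp (-s * r) ≤ 1 := by
      rw [Real.exp_le_one_iff]; nlinarith
    rw [Real.norm_eq_abs, abs_of_nonneg (mul_nonneg (by positivity) (by linarith))]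
    exact mul_le_of_le_one_right (by positivity) (by linarith [Real.exp_pos (-s * r)])

noncomputable def phi (β r : ℝ) : ℝ := ∫ s in Set.Ioi 0, s ^ (-1 - β) * (1 - Real.exp (-s * r))

lemma phi_one_pos {β : ℝ} (hβ : 0 < β) (hβ1 : β < 1) : 0 < phi β 1 := by
  have hpos : ∀ s ∈ Set.Ioi (0:ℝ), 0 < s ^ (-1 - β) * (1 - Real.exp (-s * 1)) := by
    intro s hs
    have hs0 : 0 < s := hs
    have : Real.exp (-s * 1) < 1 := by rw [Real.exp_lt_one_iff]; linarith
    exact mul_pos (by positivity) (by linarith)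
  rw [phi, setIntegral_pos_iff_support_of_nonneg_ae]
  · have : Set.Ioi (0:ℝ) ⊆ Function.support
      (fun s : ℝ => s ^ (-1 - β) * (1 - Real.exp (-s * 1))) := fun s hs => (hpos s hs).ne'
    rw [Set.inter_eq_self_of_subset_right this]
    simp
  · exact (ae_restrict_mem measurableSet_Ioi).mono fun s hs => (hpos s hs).le
  · exact phi_int hβ hβ1 zero_le_one

lemma phi_eq {β r : ℝ} (hβ : 0 < β) (hr : 0 ≤ r) : phi β r = r ^ β * phi β 1 := by
  rcases hr.eq_or_lt with rfl | hr
  · simp [phi, Real.zero_rpow hβ.ne']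
  have h := integral_comp_mul_left_Ioi
    (fun s : ℝ => s ^ (-1 - β) * (1 - Real.exp (-s * 1))) 0 hr
  rw [mul_zero] at h
  change _ = r⁻¹ • phi β 1 at h
  have h2 : ∫ x in Set.Ioi 0, (r * x) ^ (-1 - β) * (1 - Real.exp (-(r * x) * 1)) =
      r ^ (-1 - β) * phi β r := by
    rw [phi, ← integral_const_mul]
    refine setIntegral_congr_fun measurableSet_Ioi fun s hs => ?_
    have hs0 : (0:ℝ) < s := hs
    rw [Real.mul_rpow hr.le hs0.le, show -(r * s) * 1 = -s * r by ring]
    ring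
  rw [h2] at h
  have h3 : r ^ β * r * r ^ (-1 - β) = 1 := by
    rw [← Real.rpow_add_one hr.ne', ← Real.rpow_add hr,
      show β + 1 + (-1 - β) = 0 by ring, Real.rpow_zero]
  calc phi β r = (r ^ β * r) * (r ^ (-1 - β) * phi β r) := by rw [← mul_assoc, h3, one_mul]
    _ = r ^ β * phi β 1 := by rw [h, smul_eq_mul]; field_simp

lemma pd_stable {β c : ℝ} (hβ : 0 < β) (hβ1 : β < 1) (hc : 0 ≤ c) :
    PDf (fun ξ : EuclideanSpace ℝ (Fin d) => Real.exp (-(c * phi β (‖ξ‖ ^ 2)))) := by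
  have hε : ∀ n : ℕ, (0:ℝ) < 1 / ((n:ℝ) + 1) := fun n => Nat.one_div_pos_of_nat
  refine pd_lim (C := 1) (F := fun n ξ =>
    Real.exp (-(c * gtot β (1 / ((n:ℝ) + 1)))) * Real.exp (c * gmix β (1 / ((n:ℝ) + 1)) ξ))
    ?_ ?_ ?_ ?_
  · intro n
    have : StronglyMeasurable (fun ξ : EuclideanSpace ℝ (Fin d) =>
        Real.exp (c * gmix β (1 / ((n:ℝ) + 1)) ξ)) :=
      Real.continuous_exp.comp_stronglyMeasurable (gmix_meas.const_mul c)
    exact (this.const_mul _).aestronglyMeasurable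
  · intro n ξ
    rw [← Real.exp_add, abs_of_pos (Real.exp_pos _), Real.exp_le_one_iff]
    have := mul_le_mul_of_nonneg_left (gmix_le hβ (hε n) ξ) hc
    linarith
  · intro ξ
    have h := tendsto_setIntegral_of_monotone (μ := volume)
      (s := fun n : ℕ => Set.Ioi (1 / ((n:ℝ) + 1)))
      (f := fun s : ℝ => s ^ (-1 - β) * (1 - Real.exp (-s * ‖ξ‖ ^ 2)))
      (fun n => measurableSet_Ioi)
      (fun m n hmn => Set.Ioi_subset_Ioi (Nat.one_div_le_one_div hmn))
    have hU : (⋃ n : ℕ, Set.Ioi (1 / ((n:ℝ) + 1))) = Set.Ioi 0 := by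
      ext s
      simp only [Set.mem_iUnion, Set.mem_Ioi]
      exact ⟨fun ⟨n, hn⟩ => (hε n).trans hn, fun hs => exists_nat_one_div_lt hs⟩
    rw [hU] at h
    have h := h (phi_int hβ hβ1 (sq_nonneg _))
    have h2 := (Real.continuous_exp.tendsto _).comp ((h.const_mul c).neg)
    refine h2.congr fun n => ?_
    simp only [Function.comp]
    rw [← Real.exp_add]
    congr 1
    have : ∫ s in Set.Ioi (1 / ((n:ℝ) + 1)), s ^ (-1 - β) * (1 - Real.exp (-s * ‖ξ‖ ^ 2)) =
        gtot β (1 / ((n:ℝ) + 1)) - gmix β (1 / ((n:ℝ) + 1)) ξ := by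
      rw [gtot, gmix, ← integral_sub (w_int hβ (hε n)) (gm_int hβ (hε n) ξ)]
      congr 1
      ext s
      ring
    rw [this]
    ring
  · intro n
    exact pd_smul (pd_exp hβ (hε n) hc) (Real.exp_pos _).le

lemma st_int (hd : 1 ≤ d) {α t : ℝ} (hα : 0 < α) (ht : 0 < t) :
    Integrable (fun ξ : EuclideanSpace ℝ (Fin d) => Real.exp (-(t * ‖ξ‖ ^ α))) := by
  have : Nonempty (Fin d) := ⟨⟨0, hd⟩⟩
  rw [integrable_fun_norm_addHaar volume (f := fun r => Real.exp (-(t * r ^ α)))]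
  have h := integrableOn_rpow_mul_exp_neg_mul_rpow (p := α) (s := ((d - 1 : ℕ) : ℝ)) (b := t)
    (by have : (0:ℝ) ≤ ((d - 1 : ℕ) : ℝ) := Nat.cast_nonneg _
        linarith) hα ht
  simpa using h

lemma st_cos_int (hd : 1 ≤ d) {α t : ℝ} (hα : 0 < α) (ht : 0 < t)
    (x : EuclideanSpace ℝ (Fin d)) :
    Integrable (fun ξ : EuclideanSpace ℝ (Fin d) =>
      Real.exp (-(t * ‖ξ‖ ^ α)) * Real.cos ⟪x, ξ⟫) := by
  refine (st_int hd hα ht).mul_bdd (c := 1) (Continuous.aestronglyMeasurable (by fun_prop))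
    (Eventually.of_forall fun ξ => Real.abs_cos_le_one _)

lemma st_nonneg (hd : 1 ≤ d) {α t : ℝ} (hα : 0 < α) (hα2 : α < 2) (ht : 0 < t)
    (x : EuclideanSpace ℝ (Fin d)) :
    0 ≤ ∫ ξ : EuclideanSpace ℝ (Fin d), Real.exp (-(t * ‖ξ‖ ^ α)) * Real.cos ⟪x, ξ⟫ := by
  have hK := phi_one_pos (β := α / 2) (by linarith) (by linarith)
  have hpd := pd_stable (d := d) (β := α / 2) (c := t / phi (α / 2) 1) (by linarith)
    (by linarith) (by positivity)
  have he : ∀ ξ : EuclideanSpace ℝ (Fin d),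
      t / phi (α / 2) 1 * phi (α / 2) (‖ξ‖ ^ 2) = t * ‖ξ‖ ^ α := by
    intro ξ
    rw [phi_eq (by linarith) (sq_nonneg _), ← Real.rpow_natCast, ← Real.rpow_mul (norm_nonneg _)]
    push_cast
    rw [show 2 * (α / 2) = α by ring]
    field_simp
  simp only [he] at hpd
  refine ge_of_tendsto' (tendsto_integral_of_dominated_convergence (F := fun (n : ℕ) ξ =>
    Real.exp (-(t * ‖ξ‖ ^ α)) * (Real.exp (-(1 / ((n:ℝ) + 1)) * ‖ξ‖ ^ 2) * Real.cos ⟪x, ξ⟫))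
    (fun ξ => Real.exp (-(t * ‖ξ‖ ^ α))) (fun n => ?_) (st_int hd hα ht)
    (fun n => Eventually.of_forall fun ξ => ?_) (Eventually.of_forall fun ξ => ?_))
    (fun n => hpd _ Nat.one_div_pos_of_nat x)
  · exact (st_int hd hα ht).1.mul (Continuous.aestronglyMeasurable (by fun_prop))
  · rw [norm_mul, norm_mul, Real.norm_eq_abs, Real.norm_eq_abs, Real.norm_eq_abs, Real.abs_exp,
      Real.abs_exp]
    refine mul_le_of_le_one_right (Real.exp_pos _).le
      (mul_le_one₀ ?_ (abs_nonneg _) (Real.abs_cos_le_one _))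
    rw [Real.exp_le_one_iff]
    have : (0:ℝ) < 1 / ((n:ℝ) + 1) := Nat.one_div_pos_of_nat
    nlinarith [sq_nonneg ‖ξ‖]
  · have h1 : Tendsto (fun n : ℕ => Real.exp (-(1 / ((n:ℝ) + 1)) * ‖ξ‖ ^ 2)) atTop (𝓝 1) := by
      have := (Real.continuous_exp.tendsto _).comp
        ((tendsto_one_div_add_atTop_nhds_zero_nat (𝕜 := ℝ)).neg.mul_const (‖ξ‖ ^ 2))
      simpa [Function.comp_def] using this
    simpa using (h1.mul_const (Real.cos ⟪x, ξ⟫)).const_mul (Real.exp (-(t * ‖ξ‖ ^ α)))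

open FourierTransform in
lemma fourier_cos {f : EuclideanSpace ℝ (Fin d) → ℝ} (hf : Integrable f)
    (he : ∀ x, f (-x) = f x) (w : EuclideanSpace ℝ (Fin d)) :
    𝓕 (fun ξ => (f ξ : ℂ)) w = ((∫ ξ, f ξ * Real.cos ⟪(2 * π) • w, ξ⟫ : ℝ) : ℂ) := by
  have hc : Integrable (fun ξ => ((f ξ * Real.cos ⟪(2 * π) • w, ξ⟫ : ℝ) : ℂ)) :=
    Integrable.ofReal (hf.mul_bdd (c := 1) (Continuous.aestronglyMeasurable (by fun_prop))
    (Eventually.of_forall fun ξ => Real.abs_cos_le_one _))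
  have hs : Integrable (fun ξ => ((f ξ * Real.sin ⟪(2 * π) • w, ξ⟫ : ℝ) : ℂ)) :=
    Integrable.ofReal (hf.mul_bdd (c := 1) (Continuous.aestronglyMeasurable (by fun_prop))
    (Eventually.of_forall fun ξ => Real.abs_sin_le_one _))
  have h0 : ∫ ξ, f ξ * Real.sin ⟪(2 * π) • w, ξ⟫ = 0 := by
    have := integral_neg_eq_self (fun ξ => f ξ * Real.sin ⟪(2 * π) • w, ξ⟫) volume
    simp only [he, inner_neg_right, Real.sin_neg, mul_neg, integral_neg] at this
    linarith
  rw [Real.fourier_eq']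
  have e : ∀ v : EuclideanSpace ℝ (Fin d),
      Complex.exp (((-2 * π * ⟪v, w⟫ : ℝ) : ℂ) * Complex.I) • ((f v : ℝ) : ℂ) =
      ((f v * Real.cos ⟪(2 * π) • w, v⟫ : ℝ) : ℂ) -
        ((f v * Real.sin ⟪(2 * π) • w, v⟫ : ℝ) : ℂ) * Complex.I := by
    intro v
    rw [Complex.exp_mul_I, ← Complex.ofReal_cos, ← Complex.ofReal_sin,
      show -2 * π * ⟪v, w⟫ = -⟪(2 * π) • w, v⟫ by
        rw [real_inner_smul_left, real_inner_comm]; ring, Real.cos_neg, Real.sin_neg]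
    push_cast
    rw [smul_eq_mul]
    ring
  simp only [e]
  rw [integral_sub hc (hs.mul_const _), integral_mul_const, integral_complex_ofReal, integral_complex_ofReal, h0]
  simp

open FourierTransform in
lemma fourier_integrable {f q : EuclideanSpace ℝ (Fin d) → ℝ} (hf : Integrable f)
    (hcont : Continuous f) (hq : ∀ w, 0 ≤ q w)
    (hfq : ∀ w, 𝓕 (fun ξ => (f ξ : ℂ)) w = (q w : ℂ)) :
    Integrable q := by
  have hfc : Integrable (fun ξ => (f ξ : ℂ)) := hf.ofReal
  have hqc : Continuous q := by
    have h1 : Continuous (𝓕 (fun ξ => (f ξ : ℂ))) :=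
      VectorFourier.fourierIntegral_continuous Real.continuous_fourierChar
        (L := innerₗ (EuclideanSpace ℝ (Fin d))) continuous_inner hfc
    have h2 : q = fun w => (𝓕 (fun ξ => (f ξ : ℂ)) w).re := by
      ext w; rw [hfq]; simp
    rw [h2]
    exact Complex.continuous_re.comp h1
  have hqb : ∀ w, ‖q w‖ ≤ ∫ ξ, ‖(f ξ : ℂ)‖ := by
    intro w
    rw [← Complex.norm_real, ← hfq]
    exact VectorFourier.norm_fourierIntegral_le_integral_norm _ _ _ _ _
  have hT := Real.tendsto_integral_gaussian_smul' hfc (v := 0)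
    (Complex.continuous_ofReal.comp hcont).continuousAt
  have hT2 : Tendsto (fun c : ℝ => ((∫ w, Real.exp (-c⁻¹ * ‖w‖ ^ 2) * q w : ℝ) : ℂ)) atTop
      (𝓝 (f 0 : ℂ)) := by
    refine hT.congr' ?_
    filter_upwards [Ioi_mem_atTop 0] with c (hc : 0 < c)
    have J : Integrable (fun w : EuclideanSpace ℝ (Fin d) =>
        Complex.exp (- (c : ℂ)⁻¹ * ‖w‖ ^ 2 + 2 * π * Complex.I *
          ⟪(0 : EuclideanSpace ℝ (Fin d)), w⟫)) :=
      GaussianFourier.integrable_cexp_neg_mul_sq_norm_add (by simpa) _ _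
    have key : ∫ w, 𝓕 (fun w : EuclideanSpace ℝ (Fin d) =>
        Complex.exp (- (c : ℂ)⁻¹ * ‖w‖ ^ 2 + 2 * π * Complex.I *
          ⟪(0 : EuclideanSpace ℝ (Fin d)), w⟫)) w • (f w : ℂ) =
        ∫ w, Complex.exp (- (c : ℂ)⁻¹ * ‖w‖ ^ 2 + 2 * π * Complex.I *
          ⟪(0 : EuclideanSpace ℝ (Fin d)), w⟫) • 𝓕 (fun ξ => (f ξ : ℂ)) w := by
      simpa using! (VectorFourier.integral_fourierIntegral_smul_eq_flip
        (L := innerₗ (EuclideanSpace ℝ (Fin d)))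
        Real.continuous_fourierChar continuous_inner J hfc)
    rw [← integral_complex_ofReal]
    refine Eq.trans ?_ (key.trans ?_)
    · congr with w
      rw [fourier_gaussian_innerProductSpace' (by simpa)]
      have e3 : (π : ℂ) / (c : ℂ)⁻¹ = π * c := by simp
      have e4 : -(π : ℂ) ^ 2 * ‖(0 : EuclideanSpace ℝ (Fin d)) - w‖ ^ 2 / (c : ℂ)⁻¹ =
          -π ^ 2 * c * ‖(0 : EuclideanSpace ℝ (Fin d)) - w‖ ^ 2 := by
        rw [div_inv_eq_mul]; ring
      rw [e3, e4]
    · congr with w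
      rw [hfq]
      simp
  have hT3 : Tendsto (fun c : ℝ => ∫ w, Real.exp (-c⁻¹ * ‖w‖ ^ 2) * q w) atTop (𝓝 (f 0)) := by
    exact_mod_cast (Complex.continuous_re.tendsto _).comp hT2
  have hT4 : Tendsto (fun n : ℕ => ∫ w, Real.exp (-((n:ℝ)+1)⁻¹ * ‖w‖ ^ 2) * q w) atTop
      (𝓝 (f 0)) :=
    hT3.comp (tendsto_atTop_add_const_right _ 1 tendsto_natCast_atTop_atTop)
  refine ⟨hqc.aestronglyMeasurable, ?_⟩
  have hlim : ∀ w, Tendsto (fun n : ℕ => ENNReal.ofReal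
      (Real.exp (-((n:ℝ)+1)⁻¹ * ‖w‖ ^ 2) * q w)) atTop (𝓝 ‖q w‖ₑ) := by
    intro w
    rw [Real.enorm_of_nonneg (hq w)]
    refine ENNReal.tendsto_ofReal ?_
    have h1 : Tendsto (fun n : ℕ => Real.exp (-((n:ℝ)+1)⁻¹ * ‖w‖ ^ 2)) atTop (𝓝 1) := by
      have := (Real.continuous_exp.tendsto _).comp
        ((tendsto_one_div_add_atTop_nhds_zero_nat (𝕜 := ℝ)).neg.mul_const (‖w‖ ^ 2))
      simpa [Function.comp_def] using this
    simpa using h1.mul_const (q w)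
  have hF := lintegral_liminf_le (μ := (volume : Measure (EuclideanSpace ℝ (Fin d))))
    (u := atTop) (f := fun (n : ℕ) w => ENNReal.ofReal
      (Real.exp (-((n:ℝ)+1)⁻¹ * ‖w‖ ^ 2) * q w)) (fun n => by
        have : Measurable q := hqc.measurable
        fun_prop)
  have e1 : ∀ n : ℕ, ∫⁻ w, ENNReal.ofReal (Real.exp (-((n:ℝ)+1)⁻¹ * ‖w‖ ^ 2) * q w) =
      ENNReal.ofReal (∫ w, Real.exp (-((n:ℝ)+1)⁻¹ * ‖w‖ ^ 2) * q w) := by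
    intro n
    rw [ofReal_integral_eq_lintegral_ofReal]
    · exact (gauss_int _ (by positivity)).mul_bdd hqc.aestronglyMeasurable
        (Eventually.of_forall hqb)
    · exact Eventually.of_forall fun w => mul_nonneg (Real.exp_pos _).le (hq w)
  simp only [e1, (hlim _).liminf_eq, (ENNReal.tendsto_ofReal hT4).liminf_eq] at hF
  exact hF.trans_lt ENNReal.ofReal_lt_top

end aux

open FourierTransform in
theorem stmt_3 (d : ℕ) (hd : 1 ≤ d) (α : ℝ) (hα0 : 0 < α) (hα2 : α < 2)
    (p : ℝ → EuclideanSpace ℝ (Fin d) → ℝ)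
    (hp : ∀ t : ℝ, 0 < t → ∀ x : EuclideanSpace ℝ (Fin d),
      p t x = (2 * Real.pi) ^ (-(d : ℝ)) *
        ∫ ξ : EuclideanSpace ℝ (Fin d), Real.exp (-(t * ‖ξ‖ ^ α)) * Real.cos ⟪x, ξ⟫) :
    ∀ t : ℝ, 0 < t →
      Integrable (p t) ∧
      ∀ ξ : EuclideanSpace ℝ (Fin d),
        ∫ x : EuclideanSpace ℝ (Fin d),
            (p t x : ℂ) * Complex.exp (Complex.I * ((⟪x, ξ⟫ : ℝ) : ℂ))
          = ((Real.exp (-(t * ‖ξ‖ ^ α)) : ℝ) : ℂ) := by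
  intro t ht
  have hf := st_int hd hα0 ht
  have hcont : Continuous (fun ξ : EuclideanSpace ℝ (Fin d) => Real.exp (-(t * ‖ξ‖ ^ α))) := by
    have : Continuous (fun ξ : EuclideanSpace ℝ (Fin d) => ‖ξ‖ ^ α) :=
      continuous_norm.rpow_const fun _ => Or.inr hα0.le
    fun_prop
  have hF := fourier_cos hf (by simp)
  have hq := fourier_integrable hf hcont (fun w => st_nonneg hd hα0 hα2 ht ((2 * π) • w)) hF
  have h2pi : (2 * π) ≠ 0 := by positivity
  have hq' := (integrable_comp_smul_iff volume (fun x : EuclideanSpace ℝ (Fin d) =>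
    ∫ ξ : EuclideanSpace ℝ (Fin d), Real.exp (-(t * ‖ξ‖ ^ α)) * Real.cos ⟪x, ξ⟫) h2pi).1 hq
  have hpt : p t = fun x => (2 * Real.pi) ^ (-(d : ℝ)) *
        ∫ ξ : EuclideanSpace ℝ (Fin d), Real.exp (-(t * ‖ξ‖ ^ α)) * Real.cos ⟪x, ξ⟫ :=
    funext (hp t ht)
  refine ⟨by rw [hpt]; exact hq'.const_mul _, fun ξ => ?_⟩
  have hFi : Integrable (𝓕 (fun ξ : EuclideanSpace ℝ (Fin d) =>
      ((Real.exp (-(t * ‖ξ‖ ^ α)) : ℝ) : ℂ))) := by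
    rw [funext hF]
    exact hq.ofReal
  have hinv := Integrable.fourierInv_fourier_eq hf.ofReal hFi (v := ξ)
    (Complex.continuous_ofReal.comp hcont).continuousAt
  rw [Real.fourierInv_eq'] at hinv
  rw [← hinv]
  have hsc := Measure.integral_comp_smul volume (fun x : EuclideanSpace ℝ (Fin d) =>
    (p t x : ℂ) * Complex.exp (Complex.I * ((⟪x, ξ⟫ : ℝ) : ℂ))) (2 * π)
  rw [finrank_euclideanSpace_fin, abs_of_pos (by positivity)] at hsc
  have hne : ((2 * π) ^ d : ℝ) ≠ 0 := by positivity
  rw [eq_comm, inv_smul_eq_iff₀ hne] at hsc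
  rw [hsc, ← integral_smul]
  congr 1
  ext w
  rw [hF, hp t ht, Real.rpow_neg (by positivity), Real.rpow_natCast, real_inner_smul_left,
    real_inner_comm]
  have hne' : ((2 * π : ℂ)) ^ d ≠ 0 := by exact_mod_cast hne
  simp only [Complex.real_smul, smul_eq_mul]
  push_cast
  rw [mul_comm Complex.I]
  field_simp
end

section
/- There is a constant c = c(d, α) ∈ (0, ∞) such that for all t > 0 and all x ∈ ℝ^d \ {0}, c^{−1} · min(t |x|^{−d−α}, t^{−d/α}) ≤ p_t(x) ≤ c · min(t |x|^{−d−α}, t^{−d/α}). In particular p_t(x) > 0 everywhere. -/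
open MeasureTheory Real Filter
open scoped RealInnerProductSpace Topology

noncomputable def HH (d : ℕ) (s R : ℝ) : ℝ := (π / s) ^ ((d : ℝ) / 2) * exp (-(R ^ 2 / (4 * s)))

lemma HH_scale (d : ℕ) {s R : ℝ} (hs : 0 < s) (hR : 0 < R) :
    HH d s R = R ^ (-(d : ℝ)) * HH d (s * (R ^ 2)⁻¹) 1 := by
  unfold HH
  have h1 : π / (s * (R ^ 2)⁻¹) = (π / s) * R ^ 2 := by field_simp
  have h2 : (1 : ℝ) ^ 2 / (4 * (s * (R ^ 2)⁻¹)) = R ^ 2 / (4 * s) := by field_simp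
  rw [h1, h2, Real.mul_rpow (by positivity) (by positivity)]
  have h3 : (R ^ 2) ^ ((d : ℝ) / 2) = R ^ (d : ℝ) := by
    rw [← Real.rpow_natCast R 2, ← Real.rpow_mul hR.le]; congr 1; push_cast; ring
  rw [h3, Real.rpow_neg hR.le]
  have : R ^ (d : ℝ) ≠ 0 := by positivity
  field_simp

lemma rpow_half_le (d : ℕ) {v : ℝ} (hv : 0 ≤ v) : v ^ ((d : ℝ) / 2) ≤ (1 + v) ^ d := by
  calc v ^ ((d : ℝ) / 2) ≤ (1 + v) ^ ((d : ℝ) / 2) := by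
        apply Real.rpow_le_rpow hv (by linarith) (by positivity)
    _ ≤ (1 + v) ^ (d : ℝ) := by
        apply Real.rpow_le_rpow_of_exponent_le (by linarith)
        have : (0 : ℝ) ≤ d := by positivity
        linarith
    _ = _ := Real.rpow_natCast _ _

lemma HH_upper (d : ℕ) : ∃ A : ℝ, 0 < A ∧ ∀ u : ℝ, 0 < u → HH d u 1 ≤ A * (1 - exp (-u)) := by
  refine ⟨π ^ ((d : ℝ) / 2) * (4 ^ (d + 1) * (d + 1).factorial * exp (1 / 4)), by positivity, ?_⟩
  intro u hu
  unfold HH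
  obtain ⟨v, rfl⟩ : ∃ v, u = v⁻¹ := ⟨u⁻¹, by simp⟩
  have hv : 0 < v := by simpa using hu
  have h1 : 1 / (v + 1) ≤ 1 - exp (-v⁻¹) := by
    have h : v⁻¹ + 1 ≤ exp (v⁻¹) := add_one_le_exp _
    have h' : exp (-v⁻¹) ≤ (v⁻¹ + 1)⁻¹ := by
      rw [exp_neg]; exact inv_anti₀ (by positivity) h
    have : (v⁻¹ + 1)⁻¹ = 1 - 1 / (v + 1) := by field_simp; ring
    linarith
  have h2 : π / v⁻¹ = π * v := by field_simp
  have h3 : (1 : ℝ) ^ 2 / (4 * v⁻¹) = v / 4 := by field_simp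
  rw [h2, h3, Real.mul_rpow (by positivity) (by positivity)]
  have h4 := rpow_half_le d hv.le
  have h5 := Real.pow_div_factorial_le_exp (x := (1 + v) / 4) (by positivity) (d + 1)
  have h6 : (1 + v) ^ (d + 1) * exp (-(v / 4)) ≤ 4 ^ (d + 1) * (d + 1).factorial * exp (1 / 4) := by
    have e : exp ((1 + v) / 4) = exp (1 / 4) * exp (v / 4) := by rw [← exp_add]; congr 1; ring
    rw [e, div_pow, div_div, div_le_iff₀ (by positivity)] at h5
    rw [exp_neg, ← div_eq_mul_inv, div_le_iff₀ (exp_pos _)]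
    linarith
  calc π ^ ((d : ℝ) / 2) * v ^ ((d : ℝ) / 2) * exp (-(v / 4))
      ≤ π ^ ((d : ℝ) / 2) * (1 + v) ^ d * exp (-(v / 4)) := by gcongr
    _ = π ^ ((d : ℝ) / 2) * ((1 + v) ^ (d + 1) * exp (-(v / 4))) * (1 / (v + 1)) := by
        field_simp; ring
    _ ≤ π ^ ((d : ℝ) / 2) * (4 ^ (d + 1) * (d + 1).factorial * exp (1 / 4)) * (1 - exp (-v⁻¹)) := by
        gcongr

lemma HH_lower (d : ℕ) {K : ℝ} (hK : 1 < 2 * K) : ∃ a : ℝ, 0 < a ∧ ∀ u : ℝ, 0 < u →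
    a * (exp (-u) - (1 + K) * exp (-(2 * u)) + K * exp (-(4 * u))) ≤ HH d u 1 := by
  set δ := log (2 * K) / 2 with hδ
  have hδ0 : 0 < δ := by have := Real.log_pos hK; positivity
  refine ⟨exp (-(1 / (4 * δ))) / (d.factorial * exp 1), by positivity, ?_⟩
  intro u hu
  have hH : 0 ≤ HH d u 1 := by unfold HH; positivity
  set z := exp (-u) with hz
  have hz0 : 0 < z := exp_pos _
  have hz1 : z ≤ 1 := by rw [hz]; exact exp_le_one_iff.2 (by linarith)
  have e2 : exp (-(2 * u)) = z ^ 2 := by rw [hz, ← exp_nat_mul]; congr 1; push_cast; ring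
  have e4 : exp (-(4 * u)) = z ^ 4 := by rw [hz, ← exp_nat_mul]; congr 1; push_cast; ring
  rw [e2, e4]
  have efac : z - (1 + K) * z ^ 2 + K * z ^ 4 = z * (1 - z) * (1 - K * z * (1 + z)) := by ring
  rw [efac]
  by_cases hc : 1 - K * z * (1 + z) ≤ 0
  · refine le_trans ?_ hH
    apply mul_nonpos_of_nonneg_of_nonpos (by positivity)
    apply mul_nonpos_of_nonneg_of_nonpos _ hc
    apply mul_nonneg hz0.le; linarith
  · push Not at hc
    have hz2 : 2 * K * z ^ 2 < 1 := by
      have : K * z * (z - 1) ≤ 0 := by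
        apply mul_nonpos_of_nonneg_of_nonpos
        · apply mul_nonneg <;> linarith
        · linarith
      nlinarith
    have hu' : δ < u := by
      have h1 : log (2 * K * z ^ 2) < 0 := Real.log_neg (by positivity) hz2
      rw [Real.log_mul (by positivity) (by positivity), Real.log_pow, hz, Real.log_exp] at h1
      push_cast at h1
      linarith
    have h7 : z * (1 - z) * (1 - K * z * (1 + z)) ≤ z := by
      have ha : 1 - K * z * (1 + z) ≤ 1 := by
        have : 0 ≤ K * z * (1 + z) := by
          have : 0 < K := by linarith
          positivity
        linarith
      have hb : z * (1 - z) ≤ z := by nlinarith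
      calc _ ≤ z * (1 - z) * 1 := by
            apply mul_le_mul_of_nonneg_left ha
            apply mul_nonneg hz0.le; linarith
        _ ≤ z := by linarith
    have h8 : z * u ^ ((d : ℝ) / 2) ≤ d.factorial * exp 1 := by
      have h5 := Real.pow_div_factorial_le_exp (x := 1 + u) (by positivity) d
      rw [div_le_iff₀ (by positivity), exp_add] at h5
      have h4 := rpow_half_le d hu.le
      have : z * exp u = 1 := by rw [hz, ← exp_add]; simp
      calc z * u ^ ((d : ℝ) / 2) ≤ z * (exp 1 * exp u * d.factorial) := by
            gcongr; linarith
        _ = (z * exp u) * (d.factorial * exp 1) := by ring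
        _ = _ := by rw [this, one_mul]
    have h9 : exp (-(1 / (4 * δ))) ≤ exp (-(1 ^ 2 / (4 * u))) := by
      apply exp_le_exp.2
      have : 1 / (4 * u) ≤ 1 / (4 * δ) := by gcongr
      linarith
    unfold HH
    rw [Real.div_rpow (by positivity) (by positivity)]
    have h10 : (1 : ℝ) ≤ π ^ ((d : ℝ) / 2) :=
      Real.one_le_rpow (by linarith [Real.pi_gt_three]) (by positivity)
    have hup : 0 < u ^ ((d : ℝ) / 2) := by positivity
    calc _ ≤ exp (-(1 / (4 * δ))) / (d.factorial * exp 1) * z := by gcongr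
      _ ≤ exp (-(1 / (4 * δ))) / u ^ ((d : ℝ) / 2) := by
          rw [div_mul_eq_mul_div, div_le_div_iff₀ (by positivity) hup, mul_assoc]
          gcongr
      _ ≤ 1 / u ^ ((d : ℝ) / 2) * exp (-(1 ^ 2 / (4 * u))) := by
          rw [div_mul_eq_mul_div, one_mul]; gcongr
      _ ≤ _ := by gcongr

lemma gauss_cos (d : ℕ) {s : ℝ} (hs : 0 < s) (x : EuclideanSpace ℝ (Fin d)) :
    ∫ ξ : EuclideanSpace ℝ (Fin d), exp (-(‖ξ‖ ^ 2 * s)) * cos ⟪x, ξ⟫ = HH d s ‖x‖ := by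
  have hb : 0 < (s : ℂ).re := by simpa using hs
  have h := GaussianFourier.integral_cexp_neg_mul_sq_norm_add hb Complex.I x
  have hi := GaussianFourier.integrable_cexp_neg_mul_sq_norm_add hb Complex.I x
  have h1 := congrArg Complex.re h
  rw [show ((∫ v : EuclideanSpace ℝ (Fin d), Complex.exp (-(s:ℂ) * ‖v‖ ^ 2 + Complex.I * ⟪x, v⟫)).re)
    = ∫ v : EuclideanSpace ℝ (Fin d), (Complex.exp (-(s:ℂ) * ‖v‖ ^ 2 + Complex.I * ⟪x, v⟫)).re from
      (integral_re hi).symm] at h1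
  have h2 : ∀ v : EuclideanSpace ℝ (Fin d),
      (Complex.exp (-(s:ℂ) * ‖v‖ ^ 2 + Complex.I * ⟪x, v⟫)).re
        = exp (-(‖v‖ ^ 2 * s)) * cos ⟪x, v⟫ := by
    intro v
    rw [show (-(s:ℂ) * ‖v‖ ^ 2 + Complex.I * (⟪x, v⟫ : ℝ)) =
      ((-(‖v‖ ^ 2 * s) : ℝ) : ℂ) + ((⟪x, v⟫ : ℝ) : ℂ) * Complex.I by push_cast; ring]
    rw [Complex.exp_re, Complex.add_re, Complex.add_im, Complex.ofReal_re, Complex.ofReal_im,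
      Complex.re_ofReal_mul, Complex.im_ofReal_mul]
    simp
  simp_rw [h2] at h1
  rw [h1, HH]
  rw [show Complex.I ^ 2 * (‖x‖ : ℂ) ^ 2 / (4 * (s : ℂ)) = ((-(‖x‖ ^ 2 / (4 * s)) : ℝ) : ℂ) by
    rw [Complex.I_sq]; push_cast; ring]
  rw [show ((π : ℂ) / (s : ℂ)) = ((π / s : ℝ) : ℂ) by push_cast; ring,
    show ((Module.finrank ℝ (EuclideanSpace ℝ (Fin d)) : ℂ) / 2) = (((d : ℝ) / 2 : ℝ) : ℂ) by simp,
    ← Complex.ofReal_cpow (by positivity), ← Complex.ofReal_exp, ← Complex.ofReal_mul,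
    Complex.ofReal_re]

lemma integrable_gauss (d : ℕ) {s : ℝ} (hs : 0 < s) :
    Integrable (fun ξ : EuclideanSpace ℝ (Fin d) => exp (-(s * ‖ξ‖ ^ 2))) := by
  have hb : 0 < (s : ℂ).re := by simpa using hs
  have hi := (GaussianFourier.integrable_cexp_neg_mul_sq_norm_add hb 0
    (0 : EuclideanSpace ℝ (Fin d))).norm
  refine hi.congr (Eventually.of_forall fun v => ?_)
  simp only [Complex.norm_exp]
  congr 1
  simp [← Complex.ofReal_pow]

lemma integrable_stable (d : ℕ) {α t : ℝ} (hα : 0 < α) (ht : 0 < t) :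
    Integrable (fun ξ : EuclideanSpace ℝ (Fin d) => exp (-(t * ‖ξ‖ ^ α))) := by
  obtain ⟨N, hN⟩ := exists_nat_gt ((d : ℝ) / α)
  rw [div_lt_iff₀ hα] at hN
  have hI := integrable_one_add_norm (E := EuclideanSpace ℝ (Fin d)) (μ := volume) (r := N * α)
    (by simpa using hN)
  refine (hI.const_mul ((2 ^ α) ^ N * (N.factorial / t ^ N) * exp t)).mono' (Measurable.aestronglyMeasurable (by fun_prop)) ?_
  refine Eventually.of_forall fun ξ => ?_
  rw [Real.norm_eq_abs, abs_exp]
  set r := ‖ξ‖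
  have hr : 0 ≤ r := norm_nonneg _
  have h1 : (1 + r) ^ α ≤ 2 ^ α * (1 + r ^ α) := by
    rcases le_total r 1 with h | h
    · calc (1 + r) ^ α ≤ 2 ^ α := Real.rpow_le_rpow (by positivity) (by linarith) hα.le
        _ ≤ _ := le_mul_of_one_le_right (by positivity) (by linarith [Real.rpow_nonneg hr α])
    · calc (1 + r) ^ α ≤ (2 * r) ^ α := Real.rpow_le_rpow (by positivity) (by linarith) hα.le
        _ = 2 ^ α * r ^ α := Real.mul_rpow (by norm_num) hr
        _ ≤ _ := by gcongr; linarith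
  have h2 := Real.pow_div_factorial_le_exp (x := t * (1 + r ^ α)) (by positivity) N
  rw [div_le_iff₀ (by positivity), mul_pow, show t * (1 + r ^ α) = t + t * r ^ α by ring, exp_add] at h2
  have h3 : ((1 + r) ^ α) ^ N ≤ (2 ^ α) ^ N * (1 + r ^ α) ^ N := by
    rw [← mul_pow]; gcongr
  rw [Real.rpow_neg (by positivity), mul_comm (N : ℝ) α, Real.rpow_mul (by positivity),
    Real.rpow_natCast, exp_neg, ← div_eq_mul_inv, inv_eq_one_div, div_le_div_iff₀ (by positivity) (by positivity), one_mul]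
  calc ((1 + r) ^ α) ^ N ≤ (2 ^ α) ^ N * (1 + r ^ α) ^ N := h3
    _ ≤ (2 ^ α) ^ N * (exp t * exp (t * r ^ α) * N.factorial / t ^ N) := by
      gcongr
      rw [le_div_iff₀ (by positivity)]; linarith
    _ = _ := by ring


noncomputable def PP (d : ℕ) (q : ℝ → ℝ) (x : EuclideanSpace ℝ (Fin d)) : ℝ :=
  ∫ ξ : EuclideanSpace ℝ (Fin d), q (‖ξ‖ ^ 2) * cos ⟪x, ξ⟫

structure Good (d : ℕ) (A a K : ℝ) (q : ℝ → ℝ) : Prop where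
  up : ∀ x : EuclideanSpace ℝ (Fin d), x ≠ 0 →
    PP d q x ≤ A * ‖x‖ ^ (-(d : ℝ)) * (q 0 - q ((‖x‖ ^ 2)⁻¹))
  lo : ∀ x : EuclideanSpace ℝ (Fin d), x ≠ 0 →
    a * ‖x‖ ^ (-(d : ℝ)) * (q ((‖x‖ ^ 2)⁻¹) - (1 + K) * q (2 * (‖x‖ ^ 2)⁻¹)
      + K * q (4 * (‖x‖ ^ 2)⁻¹)) ≤ PP d q x
  mono : ∀ x y : EuclideanSpace ℝ (Fin d), ‖x‖ ≤ ‖y‖ → PP d q y ≤ PP d q x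

lemma Good.lim {d : ℕ} {A a K : ℝ} {q : ℕ → ℝ → ℝ} {q' b : ℝ → ℝ} (h : ∀ n, Good d A a K (q n))
    (hl : ∀ l, 0 ≤ l → Tendsto (fun n => q n l) atTop (𝓝 (q' l)))
    (hb : ∀ n l, 0 ≤ l → |q n l| ≤ b l)
    (hbi : Integrable (fun ξ : EuclideanSpace ℝ (Fin d) => b (‖ξ‖ ^ 2)))
    (hm : ∀ n, AEStronglyMeasurable (fun ξ : EuclideanSpace ℝ (Fin d) => q n (‖ξ‖ ^ 2))) :
    Good d A a K q' := by
  have hP : ∀ x, Tendsto (fun n => PP d (q n) x) atTop (𝓝 (PP d q' x)) := by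
    intro x
    refine tendsto_integral_of_dominated_convergence (fun ξ => b (‖ξ‖ ^ 2)) ?_ hbi ?_ ?_
    · intro n
      exact (hm n).mul (Continuous.aestronglyMeasurable (by fun_prop))
    · intro n
      refine Eventually.of_forall fun ξ => ?_
      rw [norm_mul, Real.norm_eq_abs, Real.norm_eq_abs]
      calc _ ≤ |q n (‖ξ‖ ^ 2)| * 1 := by gcongr; exact abs_cos_le_one _
        _ ≤ _ := by rw [mul_one]; exact hb n _ (by positivity)
    · refine Eventually.of_forall fun ξ => ?_
      exact (hl _ (by positivity)).mul_const _
  refine ⟨fun x hx => ?_, fun x hx => ?_, fun x y hxy => ?_⟩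
  · refine le_of_tendsto_of_tendsto' (hP x) ?_ (fun n => (h n).up x hx)
    exact ((hl _ le_rfl).sub (hl _ (by positivity))).const_mul _
  · refine le_of_tendsto_of_tendsto' ?_ (hP x) (fun n => (h n).lo x hx)
    exact (((hl _ (by positivity)).sub ((hl _ (by positivity)).const_mul _)).add
      ((hl _ (by positivity)).const_mul _)).const_mul _
  · exact le_of_tendsto_of_tendsto' (hP y) (hP x) (fun n => (h n).mono x y hxy)

section mix
variable {Ω : Type} [MeasurableSpace Ω] (μ : Measure Ω) [IsFiniteMeasure μ] (S : Ω → ℝ)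
  (hS : Measurable S) (hS0 : ∀ ω, 0 ≤ S ω) {δ : ℝ} (hδ : 0 < δ)
include hS hS0 hδ

lemma mix_int {l : ℝ} (hl : 0 ≤ l) : Integrable (fun ω => exp (-(l * (S ω + δ)))) μ := by
  refine Integrable.of_bound (C := 1) (Measurable.aestronglyMeasurable (by fun_prop)) ?_
  refine Eventually.of_forall fun ω => ?_
  rw [Real.norm_eq_abs, abs_exp]
  apply exp_le_one_iff.2
  have := hS0 ω
  have : 0 ≤ l * (S ω + δ) := by positivity
  linarith

lemma mix_PP (d : ℕ) (x : EuclideanSpace ℝ (Fin d)) :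
    Integrable (fun ω => HH d (S ω + δ) ‖x‖) μ ∧
    PP d (fun l => ∫ ω, exp (-(l * (S ω + δ))) ∂μ) x = ∫ ω, HH d (S ω + δ) ‖x‖ ∂μ := by
  have hI : Integrable (Function.uncurry fun (ξ : EuclideanSpace ℝ (Fin d)) (ω : Ω) =>
      exp (-(‖ξ‖ ^ 2 * (S ω + δ))) * cos ⟪x, ξ⟫) (volume.prod μ) := by
    have h1 : Integrable (fun z : EuclideanSpace ℝ (Fin d) × Ω => exp (-(δ * ‖z.1‖ ^ 2)))
        (volume.prod μ) := (integrable_gauss d hδ).comp_fst μ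
    refine h1.mono' (Measurable.aestronglyMeasurable (by
      unfold Function.uncurry; fun_prop)) (Eventually.of_forall fun z => ?_)
    rw [Function.uncurry, norm_mul, Real.norm_eq_abs, Real.norm_eq_abs, abs_exp]
    calc _ ≤ exp (-(‖z.1‖ ^ 2 * (S z.2 + δ))) * 1 := by gcongr; exact abs_cos_le_one _
      _ ≤ _ := by
        rw [mul_one]
        apply exp_le_exp.2
        have := mul_nonneg (sq_nonneg ‖z.1‖) (hS0 z.2)
        nlinarith
  have hg : ∀ ω, ∫ ξ : EuclideanSpace ℝ (Fin d), exp (-(‖ξ‖ ^ 2 * (S ω + δ))) * cos ⟪x, ξ⟫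
      = HH d (S ω + δ) ‖x‖ := fun ω => gauss_cos d (by have := hS0 ω; positivity) x
  constructor
  · have := hI.integral_prod_right
    simpa only [Function.uncurry, hg] using this
  · unfold PP
    simp_rw [← hg]
    rw [← integral_integral_swap hI]
    simp_rw [integral_mul_const]

lemma mix_good {d : ℕ} {A a K : ℝ}
    (hA : ∀ u : ℝ, 0 < u → HH d u 1 ≤ A * (1 - exp (-u)))
    (ha : ∀ u : ℝ, 0 < u →
      a * (exp (-u) - (1 + K) * exp (-(2 * u)) + K * exp (-(4 * u))) ≤ HH d u 1) :
    Good d A a K (fun l => ∫ ω, exp (-(l * (S ω + δ))) ∂μ) := by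
  have hpos : ∀ ω, 0 < S ω + δ := fun ω => by have := hS0 ω; positivity
  have hi : ∀ {l : ℝ}, 0 ≤ l → Integrable (fun ω => exp (-(l * (S ω + δ)))) μ :=
    fun hl => mix_int μ S hS hS0 hδ hl
  refine ⟨fun x hx => ?_, fun x hx => ?_, fun x y hxy => ?_⟩
  · obtain ⟨h1, h2⟩ := mix_PP μ S hS hS0 hδ d x
    have hR : 0 < ‖x‖ := norm_pos_iff.2 hx
    rw [h2, ← integral_sub (hi le_rfl) (hi (by positivity)), ← integral_const_mul]
    refine integral_mono h1 (((hi le_rfl).sub (hi (by positivity))).const_mul _) fun ω => ?_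
    dsimp only
    rw [HH_scale d (hpos ω) hR]
    have := hA ((S ω + δ) * (‖x‖ ^ 2)⁻¹) (mul_pos (hpos ω) (by positivity))
    calc _ ≤ ‖x‖ ^ (-(d : ℝ)) * (A * (1 - exp (-((S ω + δ) * (‖x‖ ^ 2)⁻¹)))) := by gcongr
      _ = _ := by rw [zero_mul, neg_zero, exp_zero, mul_comm (S ω + δ)]; ring
  · obtain ⟨h1, h2⟩ := mix_PP μ S hS hS0 hδ d x
    have hR : 0 < ‖x‖ := norm_pos_iff.2 hx
    have i1 := hi (l := (‖x‖ ^ 2)⁻¹) (by positivity)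
    have i2 := (hi (l := 2 * (‖x‖ ^ 2)⁻¹) (by positivity)).const_mul (1 + K)
    have i4 := (hi (l := 4 * (‖x‖ ^ 2)⁻¹) (by positivity)).const_mul K
    have i12 : Integrable (fun ω => exp (-((‖x‖ ^ 2)⁻¹ * (S ω + δ)))
      - (1 + K) * exp (-(2 * (‖x‖ ^ 2)⁻¹ * (S ω + δ)))) μ := i1.sub i2
    rw [h2, ← integral_const_mul (1 + K), ← integral_const_mul K, ← integral_sub i1 i2,
      ← integral_add i12 i4, ← integral_const_mul]
    refine integral_mono (((i1.sub i2).add i4).const_mul _) h1 fun ω => ?_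
    dsimp only
    rw [HH_scale d (hpos ω) hR]
    have := ha ((S ω + δ) * (‖x‖ ^ 2)⁻¹) (mul_pos (hpos ω) (by positivity))
    refine le_trans (le_of_eq ?_) (mul_le_mul_of_nonneg_left this
      (show 0 ≤ ‖x‖ ^ (-(d : ℝ)) by positivity))
    rw [show 2 * (‖x‖ ^ 2)⁻¹ * (S ω + δ) = 2 * ((S ω + δ) * (‖x‖ ^ 2)⁻¹) by ring,
      show 4 * (‖x‖ ^ 2)⁻¹ * (S ω + δ) = 4 * ((S ω + δ) * (‖x‖ ^ 2)⁻¹) by ring,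
      mul_comm (‖x‖ ^ 2)⁻¹ (S ω + δ)]
    ring
  · obtain ⟨h1, h2⟩ := mix_PP μ S hS hS0 hδ d x
    obtain ⟨h3, h4⟩ := mix_PP μ S hS hS0 hδ d y
    rw [h2, h4]
    refine integral_mono h3 h1 fun ω => ?_
    have := hpos ω
    unfold HH
    dsimp only
    gcongr

set_option linter.unusedSectionVars false in
lemma mix_meas (d : ℕ) : AEStronglyMeasurable
    (fun ξ : EuclideanSpace ℝ (Fin d) => ∫ ω, exp (-(‖ξ‖ ^ 2 * (S ω + δ))) ∂μ) := by
  apply StronglyMeasurable.aestronglyMeasurable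
  apply StronglyMeasurable.integral_prod_right
  apply Measurable.stronglyMeasurable
  unfold Function.uncurry
  fun_prop
end mix


noncomputable def gg (β w : ℝ) : ℝ := 1 - exp (-(w ^ (-(1 / β))))

lemma gg_int {β : ℝ} (h0 : 0 < β) (h1 : β < 1) : IntegrableOn (gg β) (Set.Ioi 0) := by
  have hm : Measurable (gg β) := by unfold gg; fun_prop
  rw [← Set.Ioc_union_Ioi_eq_Ioi (zero_le_one (α := ℝ))]
  refine IntegrableOn.union ?_ ?_
  · refine Integrable.of_bound (C := 1) hm.aestronglyMeasurable ?_
    refine (ae_restrict_iff' measurableSet_Ioc).2 (Eventually.of_forall fun w hw => ?_)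
    have hw0 : 0 ≤ w ^ (-(1 / β)) := Real.rpow_nonneg hw.1.le _
    have e1 : exp (-(w ^ (-(1 / β)))) ≤ 1 := exp_le_one_iff.2 (by linarith)
    rw [Real.norm_eq_abs, gg, abs_of_nonneg (by linarith)]
    linarith [exp_pos (-(w ^ (-(1 / β))))]
  · have hr : IntegrableOn (fun w : ℝ => w ^ (-(1 / β))) (Set.Ioi 1) := by
      apply integrableOn_Ioi_rpow_of_lt _ zero_lt_one
      have : 1 < 1 / β := by rw [lt_div_iff₀ h0]; linarith
      linarith
    refine Integrable.mono' hr hm.aestronglyMeasurable ?_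
    refine (ae_restrict_iff' measurableSet_Ioi).2 (Eventually.of_forall fun w hw => ?_)
    have hw : 1 < w := hw
    have hw0 : 0 ≤ w ^ (-(1 / β)) := Real.rpow_nonneg (by linarith) _
    have e1 : exp (-(w ^ (-(1 / β)))) ≤ 1 := exp_le_one_iff.2 (by linarith)
    rw [Real.norm_eq_abs, gg, abs_of_nonneg (by linarith)]
    linarith [add_one_le_exp (-(w ^ (-(1 / β))))]

lemma gg_pos {β : ℝ} (h0 : 0 < β) (h1 : β < 1) : 0 < ∫ w in Set.Ioi 0, gg β w := by
  have hp : ∀ w ∈ Set.Ioi (0 : ℝ), 0 < gg β w := by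
    intro w hw
    have hw0 : 0 < w ^ (-(1 / β)) := Real.rpow_pos_of_pos hw _
    have : exp (-(w ^ (-(1 / β)))) < 1 := by
      have := exp_lt_exp.2 (show -(w ^ (-(1 / β))) < 0 by linarith)
      rwa [exp_zero] at this
    unfold gg; linarith
  rw [setIntegral_pos_iff_support_of_nonneg_ae _ (gg_int h0 h1)]
  · have : Set.Ioi (0 : ℝ) ⊆ Function.support (gg β) ∩ Set.Ioi 0 :=
      fun w hw => ⟨(hp w hw).ne', hw⟩
    refine lt_of_lt_of_le ?_ (measure_mono this)
    simp
  · exact (ae_restrict_iff' measurableSet_Ioi).2 (Eventually.of_forall fun w hw => (hp w hw).le)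

lemma stable_lim {β t l : ℝ} (h0 : 0 < β) (h1 : β < 1) (ht : 0 < t) (hl : 0 ≤ l) {C : ℝ}
    (hC : C = ∫ w in Set.Ioi 0, gg β w) :
    Tendsto (fun n : ℕ => (∫ u in Set.Ioc (0 : ℝ) 1,
      exp (-(l * (|u| * n * C / t) ^ (-(1 / β))))) ^ n) atTop (𝓝 (exp (-(t * l ^ β)))) := by
  have hC0 : 0 < C := hC ▸ gg_pos h0 h1
  rcases hl.eq_or_lt with rfl | hl
  · simp [Real.zero_rpow h0.ne']
  set c := C / (t * l ^ β) with hc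
  have hlb : 0 < l ^ β := Real.rpow_pos_of_pos hl _
  have hc0 : 0 < c := by positivity
  have key : ∀ n : ℕ, 0 < n → (∫ u in Set.Ioc (0 : ℝ) 1,
      exp (-(l * (|u| * n * C / t) ^ (-(1 / β))))) - 1
        = - ((n * c)⁻¹ * ∫ w in (0 : ℝ)..(n * c), gg β w) := by
    intro n hn
    have hn' : (0 : ℝ) < n := by exact_mod_cast hn
    have hnc : (0 : ℝ) < n * c := by positivity
    have e1 : ∀ u ∈ Set.Ioc (0 : ℝ) 1, exp (-(l * (|u| * n * C / t) ^ (-(1 / β))))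
        = 1 - gg β (u * (n * c)) := by
      intro u hu
      have hu0 : 0 < u := hu.1
      unfold gg
      rw [abs_of_pos hu.1, sub_sub_cancel]
      congr 2
      have : u * n * C / t = (u * (n * c)) * l ^ β := by
        rw [hc]; field_simp
      rw [this, Real.mul_rpow (by positivity) hlb.le, ← Real.rpow_mul hl.le,
        show β * (-(1 / β)) = -1 by field_simp, Real.rpow_neg_one]
      field_simp
    rw [setIntegral_congr_fun measurableSet_Ioc e1]
    have hii : IntegrableOn (fun u => gg β (u * (n * c))) (Set.Ioc 0 1) := by
      have := (integrableOn_Ioi_comp_mul_right_iff (gg β) 0 hnc).2 (by simpa using gg_int h0 h1)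
      exact this.mono_set Set.Ioc_subset_Ioi_self
    rw [integral_sub (by simp) hii, ← intervalIntegral.integral_of_le zero_le_one (f := fun u => gg β (u * (n * c))),
      intervalIntegral.integral_comp_mul_right _ hnc.ne']
    simp
  have hT : Tendsto (fun n : ℕ => (n : ℝ) * ((∫ u in Set.Ioc (0 : ℝ) 1,
      exp (-(l * (|u| * n * C / t) ^ (-(1 / β))))) - 1)) atTop (𝓝 (-(t * l ^ β))) := by
    have h2 : Tendsto (fun n : ℕ => ∫ w in (0 : ℝ)..((n : ℝ) * c), gg β w) atTop (𝓝 C) := by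
      rw [hC]
      exact intervalIntegral_tendsto_integral_Ioi 0 (gg_int h0 h1)
        (tendsto_natCast_atTop_atTop.atTop_mul_const hc0)
    have h3 := (h2.const_mul (c⁻¹)).neg
    rw [show c⁻¹ * C = t * l ^ β by rw [hc]; field_simp] at h3
    refine h3.congr' ?_
    filter_upwards [eventually_gt_atTop 0] with n hn
    rw [key n hn]
    have hn' : (0 : ℝ) < n := by exact_mod_cast hn
    field_simp
  have := Real.tendsto_one_add_pow_exp_of_tendsto hT
  simpa using this

lemma stable_good {d : ℕ} {A a K : ℝ}
    (hA : ∀ u : ℝ, 0 < u → HH d u 1 ≤ A * (1 - exp (-u)))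
    (ha : ∀ u : ℝ, 0 < u →
      a * (exp (-u) - (1 + K) * exp (-(2 * u)) + K * exp (-(4 * u))) ≤ HH d u 1)
    {β t : ℝ} (h0 : 0 < β) (h1 : β < 1) (ht : 0 < t) :
    Good d A a K (fun l => exp (-(t * l ^ β))) := by
  obtain ⟨C, hC⟩ : ∃ C, C = ∫ w in Set.Ioi 0, gg β w := ⟨_, rfl⟩
  have hC0 : 0 < C := hC ▸ gg_pos h0 h1
  have step1 : ∀ δ : ℝ, 0 < δ → Good d A a K (fun l => exp (-(t * l ^ β)) * exp (-(l * δ))) := by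
    intro δ hδ
    let S : (n : ℕ) → (Fin n → ℝ) → ℝ := fun n ω => ∑ i, (|ω i| * n * C / t) ^ (-(1 / β))
    have hS : ∀ n, Measurable (S n) := fun n => by
      show Measurable (fun ω : Fin n → ℝ => ∑ i, (|ω i| * n * C / t) ^ (-(1 / β)))
      refine Finset.measurable_sum _ fun i _ => ?_
      have : Measurable (fun ω : Fin n → ℝ => |ω i|) := (measurable_pi_apply i).abs
      fun_prop
    have hS0 : ∀ n ω, 0 ≤ S n ω := fun n ω =>
      Finset.sum_nonneg fun i _ => Real.rpow_nonneg (by positivity) _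
    let μ : (n : ℕ) → Measure (Fin n → ℝ) := fun n =>
      Measure.pi (fun _ => volume.restrict (Set.Ioc (0 : ℝ) 1))
    have hμ : ∀ n, IsFiniteMeasure (μ n) := fun n => by
      show IsFiniteMeasure (Measure.pi _); infer_instance
    have hq : ∀ n l, ∫ ω, exp (-(l * (S n ω + δ))) ∂(μ n) = (∫ u in Set.Ioc (0 : ℝ) 1,
      exp (-(l * (|u| * n * C / t) ^ (-(1 / β))))) ^ n * exp (-(l * δ)) := by
      intro n l
      have := integral_fintype_prod_eq_pow (ι := Fin n) (μ := volume.restrict (Set.Ioc (0 : ℝ) 1))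
        (fun u : ℝ => exp (-(l * (|u| * n * C / t) ^ (-(1 / β)))))
      rw [Fintype.card_fin] at this
      rw [← this, ← integral_mul_const]
      congr 1
      ext ω
      rw [← exp_sum, ← exp_add]
      congr 1
      rw [Finset.sum_neg_distrib, ← Finset.mul_sum]
      ring
    refine Good.lim (q := fun n l => ∫ ω, exp (-(l * (S n ω + δ))) ∂(μ n))
      (b := fun l => exp (-(δ * l))) (fun n => mix_good (μ n) (S n) (hS n) (hS0 n) hδ hA ha)
      ?_ ?_ (integrable_gauss d hδ) (fun n => mix_meas (μ n) (S n) (hS n) (hS0 n) hδ d)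
    · intro l hl
      simp_rw [hq]
      exact (stable_lim h0 h1 ht hl hC).mul_const _
    · intro n l hl
      rw [hq, abs_mul, abs_exp, abs_pow, mul_comm l δ]
      refine mul_le_of_le_one_left (exp_pos _).le (pow_le_one₀ (abs_nonneg _) ?_)
      have := norm_setIntegral_le_of_norm_le_const (μ := volume) (s := Set.Ioc (0 : ℝ) 1) (C := 1)
        (f := fun u : ℝ => exp (-(l * (|u| * n * C / t) ^ (-(1 / β))))) (by simp) (fun u _ => by
          rw [Real.norm_eq_abs, abs_exp]
          have : 0 ≤ l * (|u| * n * C / t) ^ (-(1 / β)) := by positivity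
          exact exp_le_one_iff.2 (by linarith))
      simpa using this
  have hsq : ∀ ξ : EuclideanSpace ℝ (Fin d), (‖ξ‖ ^ 2) ^ β = ‖ξ‖ ^ (2 * β) := fun ξ => by
    rw [← Real.rpow_natCast, ← Real.rpow_mul (norm_nonneg _)]; norm_num
  refine Good.lim (q := fun (n : ℕ) l => exp (-(t * l ^ β)) * exp (-(l * (1 / ((n : ℝ) + 1)))))
    (b := fun l => exp (-(t * l ^ β))) (fun n => step1 _ (by positivity)) ?_ ?_ ?_ ?_
  · intro l hl
    have h2 : Tendsto (fun n : ℕ => exp (-(l * (1 / ((n : ℝ) + 1))))) atTop (𝓝 (exp (-(l * 0)))) :=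
      (Real.continuous_exp.tendsto _).comp
        (tendsto_one_div_add_atTop_nhds_zero_nat.const_mul l).neg
    simpa using h2.const_mul (exp (-(t * l ^ β)))
  · intro n l hl
    rw [abs_mul, abs_exp, abs_exp]
    refine mul_le_of_le_one_right (exp_pos _).le (exp_le_one_iff.2 ?_)
    have : 0 ≤ l * (1 / ((n : ℝ) + 1)) := by positivity
    linarith
  · simp_rw [hsq]
    exact integrable_stable d (by positivity) ht
  · intro n
    exact Measurable.aestronglyMeasurable (by fun_prop)


lemma phi_lower {K b : ℝ} (hK : 0 < K) (hb : 1 < b) (hKb : K * b < 1) :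
    ∃ κ ε₀ : ℝ, 0 < κ ∧ 0 < ε₀ ∧ ∀ ε : ℝ, 0 ≤ ε → ε ≤ ε₀ →
      κ * ε ≤ exp (-ε) - (1 + K) * exp (-(b * ε)) + K * exp (-(b ^ 2 * ε)) := by
  set m := (b - 1) * (1 - K * b) with hm
  have hm0 : 0 < m := mul_pos (by linarith) (by linarith)
  refine ⟨m / 2, m / (2 * (1 + K) * b ^ 2), by positivity, by positivity, fun ε h0 h1 => ?_⟩
  rw [le_div_iff₀ (by positivity)] at h1
  have e1 : 1 - ε ≤ exp (-ε) := by linarith [add_one_le_exp (-ε)]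
  have e4 : 1 - b ^ 2 * ε ≤ exp (-(b ^ 2 * ε)) := by linarith [add_one_le_exp (-(b ^ 2 * ε))]
  have e2 : exp (-(b * ε)) ≤ 1 - b * ε + (b * ε) ^ 2 := by
    have hx : 0 ≤ b * ε := by positivity
    have : exp (-(b * ε)) ≤ 1 / (1 + b * ε) := by
      rw [exp_neg, ← one_div]
      apply one_div_le_one_div_of_le (by positivity)
      linarith [add_one_le_exp (b * ε)]
    refine this.trans ?_
    rw [div_le_iff₀ (by positivity)]
    have := pow_nonneg hx 3
    nlinarith
  have f2 := mul_le_mul_of_nonneg_left e2 (show 0 ≤ 1 + K by linarith)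
  have f4 := mul_le_mul_of_nonneg_left e4 hK.le
  have g := mul_le_mul_of_nonneg_left h1 h0
  have hid : (1 - ε) - (1 + K) * (1 - b * ε + (b * ε) ^ 2) + K * (1 - b ^ 2 * ε)
    = ε * m - (1 + K) * b ^ 2 * ε ^ 2 := by rw [hm]; ring
  nlinarith

lemma stable_integral (d : ℕ) {α t : ℝ} (hα : 0 < α) (ht : 0 < t) :
    ∫ ξ : EuclideanSpace ℝ (Fin d), exp (-(t * ‖ξ‖ ^ α)) =
      t ^ (-(d : ℝ) / α) * ∫ ξ : EuclideanSpace ℝ (Fin d), exp (-(‖ξ‖ ^ α)) := by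
  have hR : 0 < t ^ (1 / α) := Real.rpow_pos_of_pos ht _
  have h := Measure.integral_comp_smul (μ := (volume : Measure (EuclideanSpace ℝ (Fin d))))
    (fun ξ => exp (-(‖ξ‖ ^ α))) (t ^ (1 / α))
  have e : ∀ ξ : EuclideanSpace ℝ (Fin d), ‖t ^ (1 / α) • ξ‖ ^ α = t * ‖ξ‖ ^ α := by
    intro ξ
    rw [norm_smul, Real.norm_eq_abs, abs_of_pos hR, Real.mul_rpow hR.le (norm_nonneg _),
      ← Real.rpow_mul ht.le, one_div_mul_cancel hα.ne', Real.rpow_one]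
  simp_rw [e] at h
  rw [h, smul_eq_mul, abs_of_pos (by positivity)]
  congr 1
  rw [finrank_euclideanSpace_fin, ← Real.rpow_natCast, ← Real.rpow_mul ht.le, ← Real.rpow_neg ht.le]
  congr 1
  ring

/-- Sharp global bounds: there is `c = c(d,α) ∈ (0,∞)` with
`c⁻¹ min(t|x|^{−d−α}, t^{−d/α}) ≤ p_t(x) ≤ c min(t|x|^{−d−α}, t^{−d/α})` for all `t > 0`,
`x ≠ 0`; in particular `p_t(x) > 0` everywhere. -/
theorem stmt_7 (d : ℕ) (hd : 1 ≤ d) (α : ℝ) (hα0 : 0 < α) (hα2 : α < 2)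
    (p : ℝ → EuclideanSpace ℝ (Fin d) → ℝ)
    (hp : ∀ t : ℝ, 0 < t → ∀ x : EuclideanSpace ℝ (Fin d),
      p t x = (2 * Real.pi) ^ (-(d : ℝ)) *
        ∫ ξ : EuclideanSpace ℝ (Fin d), Real.exp (-(t * ‖ξ‖ ^ α)) * Real.cos ⟪x, ξ⟫) :
    ∃ c : ℝ, 0 < c ∧
      (∀ t : ℝ, 0 < t → ∀ x : EuclideanSpace ℝ (Fin d), x ≠ 0 →
        c⁻¹ * min (t * ‖x‖ ^ (-(d : ℝ) - α)) (t ^ (-(d : ℝ) / α)) ≤ p t x ∧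
        p t x ≤ c * min (t * ‖x‖ ^ (-(d : ℝ) - α)) (t ^ (-(d : ℝ) / α))) ∧
      ∀ t : ℝ, 0 < t → ∀ x : EuclideanSpace ℝ (Fin d), 0 < p t x := by
  haveI : Nonempty (Fin d) := ⟨⟨0, hd⟩⟩
  obtain ⟨β, hβ⟩ : ∃ β, β = α / 2 := ⟨_, rfl⟩
  have hβ0 : 0 < β := by rw [hβ]; linarith
  have hβ1 : β < 1 := by rw [hβ]; linarith
  obtain ⟨b, hb⟩ : ∃ b : ℝ, b = 2 ^ β := ⟨_, rfl⟩
  have hb1 : 1 < b := by rw [hb]; exact Real.one_lt_rpow (by norm_num) hβ0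
  have hb2 : b < 2 := by
    rw [hb]
    calc (2 : ℝ) ^ β < 2 ^ (1 : ℝ) := Real.rpow_lt_rpow_of_exponent_lt (by norm_num) hβ1
      _ = 2 := Real.rpow_one _
  obtain ⟨K, hK1, hK2⟩ : ∃ K, 1 / 2 < K ∧ K < 1 / b :=
    exists_between (one_div_lt_one_div_of_lt (by linarith) hb2)
  rw [lt_div_iff₀ (by linarith)] at hK2
  obtain ⟨A, hA0, hA⟩ := HH_upper d
  obtain ⟨a, ha0, ha⟩ := HH_lower d (K := K) (by linarith)
  obtain ⟨κ, ε₀, hκ, hε₀, hphi⟩ := phi_lower (K := K) (by linarith) hb1 hK2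
  have good : ∀ t : ℝ, 0 < t → Good d A a K (fun l => exp (-(t * l ^ β))) :=
    fun t ht => stable_good hA ha hβ0 hβ1 ht
  obtain ⟨N, hN⟩ : ∃ N, N = (2 * π) ^ (-(d : ℝ)) := ⟨_, rfl⟩
  have hN0 : 0 < N := by rw [hN]; positivity
  have hsq : ∀ ξ : EuclideanSpace ℝ (Fin d), (‖ξ‖ ^ 2) ^ β = ‖ξ‖ ^ α := fun ξ => by
    rw [← Real.rpow_natCast, ← Real.rpow_mul (norm_nonneg _), hβ]
    congr 1; push_cast; ring
  have hpP : ∀ t : ℝ, 0 < t → ∀ x, p t x = N * PP d (fun l => exp (-(t * l ^ β))) x := by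
    intro t ht x
    rw [hp t ht x, hN, PP]
    simp_rw [hsq]
  have hinv : ∀ x : EuclideanSpace ℝ (Fin d), ((‖x‖ ^ 2)⁻¹) ^ β = ‖x‖ ^ (-α) := fun x => by
    rw [Real.inv_rpow (by positivity), hsq, Real.rpow_neg (norm_nonneg _)]
  have hsplit : ∀ x : EuclideanSpace ℝ (Fin d), x ≠ 0 →
      ‖x‖ ^ (-(d : ℝ) - α) = ‖x‖ ^ (-(d : ℝ)) * ‖x‖ ^ (-α) := fun x hx => by
    rw [← Real.rpow_add (norm_pos_iff.2 hx)]; congr 1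
  -- upper bounds
  have up1 : ∀ t : ℝ, 0 < t → ∀ x : EuclideanSpace ℝ (Fin d), x ≠ 0 →
      p t x ≤ N * A * (t * ‖x‖ ^ (-(d : ℝ) - α)) := by
    intro t ht x hx
    have h := (good t ht).up x hx
    simp only [hinv, Real.zero_rpow hβ0.ne', mul_zero, neg_zero, exp_zero] at h
    have h2 : 1 - exp (-(t * ‖x‖ ^ (-α))) ≤ t * ‖x‖ ^ (-α) := by
      linarith [add_one_le_exp (-(t * ‖x‖ ^ (-α)))]
    rw [hpP t ht x, hsplit x hx]
    have h3 : A * ‖x‖ ^ (-(d : ℝ)) * (1 - exp (-(t * ‖x‖ ^ (-α)))) ≤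
      A * ‖x‖ ^ (-(d : ℝ)) * (t * ‖x‖ ^ (-α)) := by gcongr
    calc _ ≤ N * (A * ‖x‖ ^ (-(d : ℝ)) * (t * ‖x‖ ^ (-α))) := by gcongr; exact h.trans h3
      _ = _ := by ring
  obtain ⟨J, hJ⟩ : ∃ J, J = ∫ ξ : EuclideanSpace ℝ (Fin d), exp (-(‖ξ‖ ^ α)) := ⟨_, rfl⟩
  have hJ0 : 0 ≤ J := by rw [hJ]; exact integral_nonneg fun _ => (exp_pos _).le
  have up2 : ∀ t : ℝ, 0 < t → ∀ x : EuclideanSpace ℝ (Fin d),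
      p t x ≤ N * J * t ^ (-(d : ℝ) / α) := by
    intro t ht x
    have h := (good t ht).mono 0 x (by simp)
    have h0 : PP d (fun l => exp (-(t * l ^ β))) 0 = t ^ (-(d : ℝ) / α) * J := by
      rw [hJ, ← stable_integral d hα0 ht, PP]
      simp [hsq]
    rw [h0] at h
    rw [hpP t ht x]
    calc _ ≤ N * (t ^ (-(d : ℝ) / α) * J) := by gcongr
      _ = _ := by ring
  -- lower bounds
  have lo1 : ∀ t : ℝ, 0 < t → ∀ x : EuclideanSpace ℝ (Fin d), x ≠ 0 →
      t * ‖x‖ ^ (-α) ≤ ε₀ → N * (a * κ) * (t * ‖x‖ ^ (-(d : ℝ) - α)) ≤ p t x := by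
    intro t ht x hx hε
    have hR : 0 < ‖x‖ := norm_pos_iff.2 hx
    have h := (good t ht).lo x hx
    have q2 : (2 * (‖x‖ ^ 2)⁻¹) ^ β = b * ‖x‖ ^ (-α) := by
      rw [Real.mul_rpow (by norm_num) (by positivity), hinv, hb]
    have q4 : (4 * (‖x‖ ^ 2)⁻¹) ^ β = b ^ 2 * ‖x‖ ^ (-α) := by
      rw [Real.mul_rpow (by norm_num) (by positivity), hinv, hb,
        show (4 : ℝ) = 2 * 2 by norm_num, Real.mul_rpow (by norm_num) (by norm_num), sq]
    simp only [hinv, q2, q4] at h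
    have h2 := hphi (t * ‖x‖ ^ (-α)) (by positivity) hε
    rw [show b * (t * ‖x‖ ^ (-α)) = t * (b * ‖x‖ ^ (-α)) by ring,
      show b ^ 2 * (t * ‖x‖ ^ (-α)) = t * (b ^ 2 * ‖x‖ ^ (-α)) by ring] at h2
    rw [hpP t ht x, hsplit x hx]
    calc _ = N * (a * ‖x‖ ^ (-(d : ℝ)) * (κ * (t * ‖x‖ ^ (-α)))) := by ring
      _ ≤ N * _ := by
        refine mul_le_mul_of_nonneg_left (le_trans ?_ h) hN0.le
        exact mul_le_mul_of_nonneg_left h2 (by positivity)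
  obtain ⟨m, hm⟩ : ∃ m, m = min (N * (a * κ)) (N * (a * κ) * ε₀ ^ ((d + α) / α)) := ⟨_, rfl⟩
  have hm0 : 0 < m := by rw [hm]; exact lt_min (by positivity) (by positivity)
  have lo : ∀ t : ℝ, 0 < t → ∀ x : EuclideanSpace ℝ (Fin d), x ≠ 0 →
      m * min (t * ‖x‖ ^ (-(d : ℝ) - α)) (t ^ (-(d : ℝ) / α)) ≤ p t x := by
    intro t ht x hx
    have hR : 0 < ‖x‖ := norm_pos_iff.2 hx
    by_cases hε : t * ‖x‖ ^ (-α) ≤ ε₀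
    · refine le_trans ?_ (lo1 t ht x hx hε)
      have : 0 ≤ t * ‖x‖ ^ (-(d : ℝ) - α) := by positivity
      calc _ ≤ m * (t * ‖x‖ ^ (-(d : ℝ) - α)) := by gcongr; exact min_le_left _ _
        _ ≤ _ := by gcongr; rw [hm]; exact min_le_left _ _
    · push Not at hε
      have hte : 0 < t / ε₀ := by positivity
      set R₀ := (t / ε₀) ^ (1 / α) with hR₀
      have hR₀0 : 0 < R₀ := by positivity
      have hRa : R₀ ^ α = t / ε₀ := by
        rw [hR₀, ← Real.rpow_mul hte.le, one_div_mul_cancel hα0.ne', Real.rpow_one]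
      obtain ⟨y, hy⟩ : ∃ y : EuclideanSpace ℝ (Fin d), ‖y‖ = R₀ :=
        exists_norm_eq _ hR₀0.le
      have hy0 : y ≠ 0 := by rw [← norm_pos_iff, hy]; exact hR₀0
      have hyε : t * ‖y‖ ^ (-α) ≤ ε₀ := by
        rw [hy, Real.rpow_neg hR₀0.le, hRa]
        apply le_of_eq; field_simp
      have hxy : ‖x‖ ≤ ‖y‖ := by
        rw [hy]
        rw [Real.rpow_neg hR.le, ← div_eq_mul_inv, lt_div_iff₀ (by positivity)] at hε
        have : ‖x‖ ^ α ≤ R₀ ^ α := by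
          rw [hRa, le_div_iff₀ hε₀]; linarith
        exact (Real.rpow_le_rpow_iff hR.le hR₀0.le hα0).1 this
      have h1 := lo1 t ht y hy0 hyε
      have h2 : p t y ≤ p t x := by
        rw [hpP t ht, hpP t ht]
        exact mul_le_mul_of_nonneg_left ((good t ht).mono x y hxy) hN0.le
      refine le_trans ?_ (h1.trans h2)
      have h3 : t * ‖y‖ ^ (-(d : ℝ) - α) = ε₀ ^ ((d + α) / α) * t ^ (-(d : ℝ) / α) := by
        rw [hy, hR₀, ← Real.rpow_mul hte.le, Real.div_rpow ht.le hε₀.le,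
          show (1 / α) * (-(d : ℝ) - α) = -(d : ℝ) / α - 1 by field_simp,
          Real.rpow_sub_one ht.ne',
          show -(d : ℝ) / α - 1 = -((d + α) / α) by field_simp; ring,
          Real.rpow_neg hε₀.le]
        field_simp
      rw [h3]
      calc _ ≤ m * t ^ (-(d : ℝ) / α) := by gcongr; exact min_le_right _ _
        _ ≤ N * (a * κ) * ε₀ ^ ((d + α) / α) * t ^ (-(d : ℝ) / α) := by
          gcongr; rw [hm]; exact min_le_right _ _
        _ = _ := by ring
  have hposx : ∀ t : ℝ, 0 < t → ∀ x : EuclideanSpace ℝ (Fin d), x ≠ 0 → 0 < p t x := by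
    intro t ht x hx
    have hR : 0 < ‖x‖ := norm_pos_iff.2 hx
    refine lt_of_lt_of_le ?_ (lo t ht x hx)
    exact mul_pos hm0 (lt_min (by positivity) (by positivity))
  refine ⟨N * A + N * J + m⁻¹, by positivity, fun t ht x hx => ⟨?_, ?_⟩, fun t ht x => ?_⟩
  · refine le_trans ?_ (lo t ht x hx)
    have hR : 0 < ‖x‖ := norm_pos_iff.2 hx
    have hmin : 0 ≤ min (t * ‖x‖ ^ (-(d : ℝ) - α)) (t ^ (-(d : ℝ) / α)) :=
      le_min (by positivity) (by positivity)
    refine mul_le_mul_of_nonneg_right ?_ hmin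
    rw [inv_le_comm₀ (by positivity) hm0]
    have : 0 ≤ N * A + N * J := by positivity
    linarith
  · rw [mul_min_of_nonneg _ _ (by positivity)]
    refine le_min ((up1 t ht x hx).trans ?_) ((up2 t ht x).trans ?_)
    · have : 0 ≤ N * J + m⁻¹ := by positivity
      gcongr; linarith
    · have : 0 ≤ N * A + m⁻¹ := by positivity
      gcongr; linarith
  · by_cases hx : x = 0
    · obtain ⟨y, hy⟩ : ∃ y : EuclideanSpace ℝ (Fin d), ‖y‖ = 1 := exists_norm_eq _ zero_le_one
      have hy0 : y ≠ 0 := by rw [← norm_pos_iff, hy]; exact one_pos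
      refine lt_of_lt_of_le (hposx t ht y hy0) ?_
      rw [hpP t ht, hpP t ht]
      exact mul_le_mul_of_nonneg_left ((good t ht).mono x y (by simp [hx])) hN0.le
    · exact hposx t ht x hx
end
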